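/- The operators on W satisfy the mixed Cartan relations of U_q[gl(2/1)]: [E11, E23] = 0, [E22, E23] = E23, [E33, E23] = −E23, [E11, E32] = 0, [E22, E32] = −E32, [E33, E32] = E32, and moreover [E12, E32] = 0 and [E21, E23] = 0 as linear operators on W. -/

import Mathlib

/-!
Every defining formula of the representation stays valid when `m11` is allowed to be an arbitrary
integer, provided `v(k, m11) = 0` out of range: wherever the right-hand side contains a basis vector
that is in range although the left-hand side is out of range, its coefficient contains the factor
`[0] = 0`. Moreover every square root of a product or quotient of `q`-numbers splits into square
roots of single `q`-numbers, since at each occurrence one suitable argument is nonnegative and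
`[n] ≥ 0` for `n ≥ 0`. With these unrestricted, split formulas (the lemmas `GZ.E11_bv`, …,
`GZ.E32_bv₃`), each commutator relation evaluated on a basis vector is an identity between monomials
in the numbers `√[n]`, with no boundary cases left.
-/

noncomputable section

/-- The `q`-number `[x] = (q^x - q^(-x))/(q - q⁻¹)`. -/
def qn (q : ℝ) (x : ℤ) : ℝ := (q ^ x - q ^ (-x)) / (q - q⁻¹)

/-- The triple `(m12, m22, m32)` attached to the sector `k ∈ {0,1,2,3}`. -/
def trip (m13 m23 m33 : ℤ) : Fin 4 → ℤ × ℤ × ℤ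
  | 0 => (m13, m23, m33)
  | 1 => (m13, m23 - 1, m33 + 1)
  | 2 => (m13 - 1, m23, m33 + 1)
  | 3 => (m13 - 1, m23 - 1, m33 + 2)

def M12 (m13 m23 m33 : ℤ) (k : Fin 4) : ℤ := (trip m13 m23 m33 k).1
def M22 (m13 m23 m33 : ℤ) (k : Fin 4) : ℤ := (trip m13 m23 m33 k).2.1
def M32 (m13 m23 m33 : ℤ) (k : Fin 4) : ℤ := (trip m13 m23 m33 k).2.2

/-- `m11` is in the allowed range `m22 ≤ m11 ≤ m12` of the sector `k`. -/
def InR (m13 m23 m33 : ℤ) (k : Fin 4) (x : ℤ) : Prop :=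
  M22 m13 m23 m33 k ≤ x ∧ x ≤ M12 m13 m23 m33 k

instance (m13 m23 m33 : ℤ) (k : Fin 4) (x : ℤ) : Decidable (InR m13 m23 m33 k x) :=
  instDecidableAnd

/-- The index set of the basis `v(k, m11)` of `W`. -/
abbrev Idx (m13 m23 m33 : ℤ) : Type :=
  {p : Fin 4 × ℤ // InR m13 m23 m33 p.1 p.2}

/-- The module `W = W^q([m13,m23,m33])`, realized as the free complex vector
space on the basis `v(k, m11)`, `k ∈ {0,1,2,3}`, `m22 ≤ m11 ≤ m12`. -/
abbrev Wsp (m13 m23 m33 : ℤ) : Type := Idx m13 m23 m33 →₀ ℂ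

/-- The basis vector `v(k, m11)` (zero if `m11` is out of range). -/
def bv (m13 m23 m33 : ℤ) (k : Fin 4) (x : ℤ) : Wsp m13 m23 m33 :=
  if h : InR m13 m23 m33 k x then Finsupp.single ⟨(k, x), h⟩ 1 else 0

/-- The sector `V_k`, the span of the `v(k, ·)`. -/
def Vk (m13 m23 m33 : ℤ) (k : Fin 4) : Submodule ℂ (Wsp m13 m23 m33) :=
  Submodule.span ℂ (Set.range (bv m13 m23 m33 k))

/-- The Gel'fand--Zetlin realization of the induced `U_q[gl(2/1)]`-module
`W^q([m13,m23,m33])`: seven linear operators acting on the basis `v(k, m11)`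
by the stated formulas (terms with `m11` out of range being `0`). -/
structure GZ (q : ℝ) (m13 m23 m33 : ℤ) where
  E11 : Wsp m13 m23 m33 →ₗ[ℂ] Wsp m13 m23 m33
  E22 : Wsp m13 m23 m33 →ₗ[ℂ] Wsp m13 m23 m33
  E33 : Wsp m13 m23 m33 →ₗ[ℂ] Wsp m13 m23 m33
  E12 : Wsp m13 m23 m33 →ₗ[ℂ] Wsp m13 m23 m33
  E21 : Wsp m13 m23 m33 →ₗ[ℂ] Wsp m13 m23 m33
  E23 : Wsp m13 m23 m33 →ₗ[ℂ] Wsp m13 m23 m33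
  E32 : Wsp m13 m23 m33 →ₗ[ℂ] Wsp m13 m23 m33
  hE11 : ∀ (k : Fin 4) (x : ℤ), InR m13 m23 m33 k x →
    E11 (bv m13 m23 m33 k x) = (x : ℂ) • bv m13 m23 m33 k x
  hE22 : ∀ (k : Fin 4) (x : ℤ), InR m13 m23 m33 k x →
    E22 (bv m13 m23 m33 k x) =
      ((M12 m13 m23 m33 k + M22 m13 m23 m33 k - x : ℤ) : ℂ) • bv m13 m23 m33 k x
  hE33 : ∀ (k : Fin 4) (x : ℤ), InR m13 m23 m33 k x →
    E33 (bv m13 m23 m33 k x) = ((M32 m13 m23 m33 k : ℤ) : ℂ) • bv m13 m23 m33 k x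
  hE12 : ∀ (k : Fin 4) (x : ℤ), InR m13 m23 m33 k x →
    E12 (bv m13 m23 m33 k x) =
      ((Real.sqrt (qn q (M12 m13 m23 m33 k - x) * qn q (x - M22 m13 m23 m33 k + 1)) : ℝ) : ℂ) •
        bv m13 m23 m33 k (x + 1)
  hE21 : ∀ (k : Fin 4) (x : ℤ), InR m13 m23 m33 k x →
    E21 (bv m13 m23 m33 k x) =
      ((Real.sqrt (qn q (M12 m13 m23 m33 k - x + 1) * qn q (x - M22 m13 m23 m33 k)) : ℝ) : ℂ) •
        bv m13 m23 m33 k (x - 1)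
  hE23₀ : ∀ x : ℤ, InR m13 m23 m33 0 x → E23 (bv m13 m23 m33 0 x) = 0
  hE23₁ : ∀ x : ℤ, InR m13 m23 m33 1 x →
    E23 (bv m13 m23 m33 1 x) =
      ((Real.sqrt (qn q (x - m23 + 1) / qn q (m13 - m23 + 1)) * qn q (m23 + m33) : ℝ) : ℂ) •
        bv m13 m23 m33 0 x
  hE23₂ : ∀ x : ℤ, InR m13 m23 m33 2 x →
    E23 (bv m13 m23 m33 2 x) =
      ((Real.sqrt (qn q (m13 - x) / qn q (m13 - m23)) * qn q (m13 + m33 + 1) : ℝ) : ℂ) •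
        bv m13 m23 m33 0 x
  hE23₃ : ∀ x : ℤ, InR m13 m23 m33 3 x →
    E23 (bv m13 m23 m33 3 x) =
      ((q⁻¹ * Real.sqrt (qn q (m13 - x) / qn q (m13 - m23 + 1)) * qn q (m13 + m33 + 1) : ℝ) : ℂ) •
          bv m13 m23 m33 1 x
        - ((q⁻¹ * Real.sqrt (qn q (x - m23 + 1) * qn q (m13 - m23)) *
            (qn q (m23 + m33) / qn q (m13 - m23 + 1)) : ℝ) : ℂ) • bv m13 m23 m33 2 x
  hE32₀ : ∀ x : ℤ, InR m13 m23 m33 0 x →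
    E32 (bv m13 m23 m33 0 x) =
      ((Real.sqrt (qn q (x - m23 + 1) / qn q (m13 - m23 + 1)) : ℝ) : ℂ) • bv m13 m23 m33 1 x
        + ((Real.sqrt (qn q (m13 - x) * qn q (m13 - m23)) / qn q (m13 - m23 + 1) : ℝ) : ℂ) •
            bv m13 m23 m33 2 x
  hE32₁ : ∀ x : ℤ, InR m13 m23 m33 1 x →
    E32 (bv m13 m23 m33 1 x) =
      ((q * Real.sqrt (qn q (m13 - x) / qn q (m13 - m23 + 1)) : ℝ) : ℂ) • bv m13 m23 m33 3 x
  hE32₂ : ∀ x : ℤ, InR m13 m23 m33 2 x →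
    E32 (bv m13 m23 m33 2 x) =
      -(((q * Real.sqrt (qn q (x - m23 + 1) / qn q (m13 - m23)) : ℝ) : ℂ) • bv m13 m23 m33 3 x)
  hE32₃ : ∀ x : ℤ, InR m13 m23 m33 3 x → E32 (bv m13 m23 m33 3 x) = 0

/-- The square root `√[n]` of a `q`-number, as a complex number. -/
def rq (q : ℝ) (n : ℤ) : ℂ := ((Real.sqrt (qn q n) : ℝ) : ℂ)

theorem qn_zero (q : ℝ) : qn q 0 = 0 := by simp [qn]

theorem rq_zero (q : ℝ) : rq q 0 = 0 := by simp [rq, qn_zero]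

theorem qn_nonneg {q : ℝ} (hq : 0 < q) {n : ℤ} (hn : 0 ≤ n) : 0 ≤ qn q n := by
  unfold qn
  rcases le_total 1 q with h | h
  · apply div_nonneg
    · exact sub_nonneg.2 (zpow_le_zpow_right₀ h (by omega))
    · exact sub_nonneg.2 ((inv_le_one_of_one_le₀ h).trans h)
  · apply div_nonneg_of_nonpos
    · exact sub_nonpos.2 (zpow_le_zpow_right_of_le_one₀ hq h (by omega))
    · exact sub_nonpos.2 (h.trans ((one_le_inv₀ hq).2 h))

/-- The root of a product splits as soon as one factor is nonnegative, because `Real.sqrt` vanishes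
on negative numbers. -/
theorem sqrt_qn_mul {q : ℝ} (hq : 0 < q) {a b : ℤ} (h : 0 ≤ a ∨ 0 ≤ b) :
    ((Real.sqrt (qn q a * qn q b) : ℝ) : ℂ) = rq q a * rq q b := by
  rcases h with h | h
  · rw [Real.sqrt_mul (qn_nonneg hq h)]; simp [rq]
  · rw [Real.sqrt_mul' _ (qn_nonneg hq h)]; simp [rq]

theorem sqrt_qn_div {q : ℝ} (hq : 0 < q) (a : ℤ) {b : ℤ} (h : 0 ≤ b) :
    ((Real.sqrt (qn q a / qn q b) : ℝ) : ℂ) = rq q a / rq q b := by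
  rw [Real.sqrt_div' _ (qn_nonneg hq h)]; simp [rq]

theorem bv_of_not {m13 m23 m33 : ℤ} {k : Fin 4} {x : ℤ} (h : ¬ InR m13 m23 m33 k x) :
    bv m13 m23 m33 k x = 0 := dif_neg h

theorem inR_iff₀ {m13 m23 m33 x : ℤ} : InR m13 m23 m33 0 x ↔ m23 ≤ x ∧ x ≤ m13 := Iff.rfl

theorem inR_iff₁ {m13 m23 m33 x : ℤ} : InR m13 m23 m33 1 x ↔ m23 - 1 ≤ x ∧ x ≤ m13 := Iff.rfl

theorem inR_iff₂ {m13 m23 m33 x : ℤ} : InR m13 m23 m33 2 x ↔ m23 ≤ x ∧ x ≤ m13 - 1 := Iff.rfl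

theorem inR_iff₃ {m13 m23 m33 x : ℤ} : InR m13 m23 m33 3 x ↔ m23 - 1 ≤ x ∧ x ≤ m13 - 1 := Iff.rfl

/-- A term `√[n] v(k, x)` vanishes as soon as `v(k, x)` can only be in range when `n = 0`. -/
theorem rq_smul_bv_eq_zero (q : ℝ) {m13 m23 m33 : ℤ} {k : Fin 4} {x n : ℤ}
    (h : InR m13 m23 m33 k x → n = 0) : rq q n • bv m13 m23 m33 k x = 0 := by
  by_cases hx : InR m13 m23 m33 k x
  · rw [h hx, rq_zero, zero_smul]
  · rw [bv_of_not hx, smul_zero]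

/-- Two linear maps on `W` agree if they agree on the vectors `v(k, m11)`. -/
theorem ext_bv {m13 m23 m33 : ℤ} {A B : Wsp m13 m23 m33 →ₗ[ℂ] Wsp m13 m23 m33}
    (h : ∀ k x, A (bv m13 m23 m33 k x) = B (bv m13 m23 m33 k x)) : A = B := by
  refine Finsupp.lhom_ext' fun ⟨⟨k, x⟩, hx⟩ => LinearMap.ext_ring ?_
  simpa [bv, dif_pos hx] using h k x

/-- Every sector range is nonempty or misses being so by one: `m12 ≥ m22 - 1`. -/
theorem M22_le_M12_add_one {m13 m23 : ℤ} (m33 : ℤ) (hm : m23 ≤ m13) (k : Fin 4) :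
    M22 m13 m23 m33 k ≤ M12 m13 m23 m33 k + 1 := by
  fin_cases k <;> simp [M22, M12, trip] <;> omega

namespace GZ

variable {q : ℝ} {m13 m23 m33 : ℤ}

/-! ### The defining formulas without range restrictions -/

theorem E11_bv (R : GZ q m13 m23 m33) (k : Fin 4) (x : ℤ) :
    R.E11 (bv m13 m23 m33 k x) = (x : ℂ) • bv m13 m23 m33 k x := by
  by_cases h : InR m13 m23 m33 k x
  · exact R.hE11 k x h
  · simp [bv_of_not h]

theorem E22_bv (R : GZ q m13 m23 m33) (k : Fin 4) (x : ℤ) :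
    R.E22 (bv m13 m23 m33 k x) =
      ((M12 m13 m23 m33 k + M22 m13 m23 m33 k - x : ℤ) : ℂ) • bv m13 m23 m33 k x := by
  by_cases h : InR m13 m23 m33 k x
  · exact R.hE22 k x h
  · simp [bv_of_not h]

theorem E33_bv (R : GZ q m13 m23 m33) (k : Fin 4) (x : ℤ) :
    R.E33 (bv m13 m23 m33 k x) = ((M32 m13 m23 m33 k : ℤ) : ℂ) • bv m13 m23 m33 k x := by
  by_cases h : InR m13 m23 m33 k x
  · exact R.hE33 k x h
  · simp [bv_of_not h]

theorem E12_bv (R : GZ q m13 m23 m33) (hq : 0 < q) (hm : m23 ≤ m13) (k : Fin 4) (x : ℤ) :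
    R.E12 (bv m13 m23 m33 k x) =
      (rq q (M12 m13 m23 m33 k - x) * rq q (x - M22 m13 m23 m33 k + 1)) •
        bv m13 m23 m33 k (x + 1) := by
  have hk := M22_le_M12_add_one m33 hm k
  by_cases h : InR m13 m23 m33 k x
  · rw [R.hE12 k x h, sqrt_qn_mul hq (by omega)]
  · rw [bv_of_not h, map_zero, mul_smul, rq_smul_bv_eq_zero, smul_zero]
    unfold InR at *
    omega

theorem E21_bv (R : GZ q m13 m23 m33) (hq : 0 < q) (hm : m23 ≤ m13) (k : Fin 4) (x : ℤ) :
    R.E21 (bv m13 m23 m33 k x) =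
      (rq q (x - M22 m13 m23 m33 k) * rq q (M12 m13 m23 m33 k - x + 1)) •
        bv m13 m23 m33 k (x - 1) := by
  have hk := M22_le_M12_add_one m33 hm k
  by_cases h : InR m13 m23 m33 k x
  · rw [R.hE21 k x h, sqrt_qn_mul hq (by omega), mul_comm]
  · rw [bv_of_not h, map_zero, mul_smul, rq_smul_bv_eq_zero, smul_zero]
    unfold InR at *
    omega

theorem E23_bv₀ (R : GZ q m13 m23 m33) (x : ℤ) : R.E23 (bv m13 m23 m33 0 x) = 0 := by
  by_cases h : InR m13 m23 m33 0 x
  · exact R.hE23₀ x h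
  · simp [bv_of_not h]

theorem E23_bv₁ (R : GZ q m13 m23 m33) (hq : 0 < q) (hm : m23 ≤ m13) (x : ℤ) :
    R.E23 (bv m13 m23 m33 1 x) =
      ((rq q (m13 - m23 + 1))⁻¹ * (qn q (m23 + m33) : ℂ)) •
        rq q (x - m23 + 1) • bv m13 m23 m33 0 x := by
  by_cases h : InR m13 m23 m33 1 x
  · rw [R.hE23₁ x h, Complex.ofReal_mul, sqrt_qn_div hq _ (by omega)]
    module
  · rw [bv_of_not h, map_zero, rq_smul_bv_eq_zero, smul_zero]
    rw [inR_iff₁] at h; rw [inR_iff₀]; omega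

theorem E23_bv₂ (R : GZ q m13 m23 m33) (hq : 0 < q) (hm : m23 ≤ m13) (x : ℤ) :
    R.E23 (bv m13 m23 m33 2 x) =
      ((rq q (m13 - m23))⁻¹ * (qn q (m13 + m33 + 1) : ℂ)) •
        rq q (m13 - x) • bv m13 m23 m33 0 x := by
  by_cases h : InR m13 m23 m33 2 x
  · rw [R.hE23₂ x h, Complex.ofReal_mul, sqrt_qn_div hq _ (by omega)]
    module
  · rw [bv_of_not h, map_zero, rq_smul_bv_eq_zero, smul_zero]
    rw [inR_iff₂] at h; rw [inR_iff₀]; omega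

theorem E23_bv₃ (R : GZ q m13 m23 m33) (hq : 0 < q) (hm : m23 ≤ m13) (x : ℤ) :
    R.E23 (bv m13 m23 m33 3 x) =
      ((q : ℂ)⁻¹ * (rq q (m13 - m23 + 1))⁻¹ * (qn q (m13 + m33 + 1) : ℂ)) •
          rq q (m13 - x) • bv m13 m23 m33 1 x
        - ((q : ℂ)⁻¹ * rq q (m13 - m23) *
            ((qn q (m23 + m33) : ℂ) / (qn q (m13 - m23 + 1) : ℂ))) •
          rq q (x - m23 + 1) • bv m13 m23 m33 2 x := by
  by_cases h : InR m13 m23 m33 3 x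
  · rw [R.hE23₃ x h]
    simp only [Complex.ofReal_mul, Complex.ofReal_div, Complex.ofReal_inv]
    rw [sqrt_qn_div hq _ (by omega), sqrt_qn_mul hq (by omega)]
    module
  · rw [bv_of_not h, map_zero, rq_smul_bv_eq_zero, rq_smul_bv_eq_zero, smul_zero, smul_zero,
      sub_zero]
    · rw [inR_iff₃] at h; rw [inR_iff₂]; omega
    · rw [inR_iff₃] at h; rw [inR_iff₁]; omega

theorem E32_bv₀ (R : GZ q m13 m23 m33) (hq : 0 < q) (hm : m23 ≤ m13) (x : ℤ) :
    R.E32 (bv m13 m23 m33 0 x) =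
      (rq q (m13 - m23 + 1))⁻¹ • rq q (x - m23 + 1) • bv m13 m23 m33 1 x
        + (rq q (m13 - m23) / (qn q (m13 - m23 + 1) : ℂ)) •
          rq q (m13 - x) • bv m13 m23 m33 2 x := by
  by_cases h : InR m13 m23 m33 0 x
  · rw [R.hE32₀ x h, Complex.ofReal_div, sqrt_qn_div hq _ (by omega), sqrt_qn_mul hq (by omega)]
    module
  · rw [bv_of_not h, map_zero, rq_smul_bv_eq_zero, rq_smul_bv_eq_zero, smul_zero, smul_zero,
      add_zero]
    · rw [inR_iff₀] at h; rw [inR_iff₂]; omega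
    · rw [inR_iff₀] at h; rw [inR_iff₁]; omega

theorem E32_bv₁ (R : GZ q m13 m23 m33) (hq : 0 < q) (hm : m23 ≤ m13) (x : ℤ) :
    R.E32 (bv m13 m23 m33 1 x) =
      ((q : ℂ) * (rq q (m13 - m23 + 1))⁻¹) • rq q (m13 - x) • bv m13 m23 m33 3 x := by
  by_cases h : InR m13 m23 m33 1 x
  · rw [R.hE32₁ x h, Complex.ofReal_mul, sqrt_qn_div hq _ (by omega)]
    module
  · rw [bv_of_not h, map_zero, rq_smul_bv_eq_zero, smul_zero]
    rw [inR_iff₁] at h; rw [inR_iff₃]; omega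

theorem E32_bv₂ (R : GZ q m13 m23 m33) (hq : 0 < q) (hm : m23 ≤ m13) (x : ℤ) :
    R.E32 (bv m13 m23 m33 2 x) =
      -(((q : ℂ) * (rq q (m13 - m23))⁻¹) • rq q (x - m23 + 1) • bv m13 m23 m33 3 x) := by
  by_cases h : InR m13 m23 m33 2 x
  · rw [R.hE32₂ x h, Complex.ofReal_mul, sqrt_qn_div hq _ (by omega)]
    module
  · rw [bv_of_not h, map_zero, rq_smul_bv_eq_zero, smul_zero, neg_zero]
    rw [inR_iff₂] at h; rw [inR_iff₃]; omega

theorem E32_bv₃ (R : GZ q m13 m23 m33) (x : ℤ) : R.E32 (bv m13 m23 m33 3 x) = 0 := by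
  by_cases h : InR m13 m23 m33 3 x
  · exact R.hE32₃ x h
  · simp [bv_of_not h]

/-! ### The commutators -/

theorem cartan_E23 (R : GZ q m13 m23 m33) (hq : 0 < q) (hm : m23 ≤ m13) :
    R.E11 ∘ₗ R.E23 - R.E23 ∘ₗ R.E11 = 0 ∧
    R.E22 ∘ₗ R.E23 - R.E23 ∘ₗ R.E22 = R.E23 ∧
    R.E33 ∘ₗ R.E23 - R.E23 ∘ₗ R.E33 = -R.E23 := by
  refine ⟨ext_bv fun k x => ?_, ext_bv fun k x => ?_, ext_bv fun k x => ?_⟩ <;>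
  · fin_cases k <;>
    simp [E11_bv, E22_bv, E33_bv, E23_bv₀, E23_bv₁ R hq hm, E23_bv₂ R hq hm, E23_bv₃ R hq hm,
      M12, M22, M32, trip] <;>
    module

theorem cartan_E32 (R : GZ q m13 m23 m33) (hq : 0 < q) (hm : m23 ≤ m13) :
    R.E11 ∘ₗ R.E32 - R.E32 ∘ₗ R.E11 = 0 ∧
    R.E22 ∘ₗ R.E32 - R.E32 ∘ₗ R.E22 = -R.E32 ∧
    R.E33 ∘ₗ R.E32 - R.E32 ∘ₗ R.E33 = R.E32 := by
  refine ⟨ext_bv fun k x => ?_, ext_bv fun k x => ?_, ext_bv fun k x => ?_⟩ <;>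
  · fin_cases k <;>
    simp [E11_bv, E22_bv, E33_bv, E32_bv₃, E32_bv₀ R hq hm, E32_bv₁ R hq hm, E32_bv₂ R hq hm,
      M12, M22, M32, trip] <;>
    module

theorem E12_comm_E32 (R : GZ q m13 m23 m33) (hq : 0 < q) (hm : m23 ≤ m13) :
    R.E12 ∘ₗ R.E32 - R.E32 ∘ₗ R.E12 = 0 := by
  refine ext_bv fun k x => ?_
  -- Bring equal arguments of `√[·]` to the same syntactic form.
  have e₁ : x - (m23 - 1) + 1 = x - m23 + 2 := by ring
  have e₂ : x + 1 - m23 + 1 = x - m23 + 2 := by ring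
  have e₃ : m13 - (x + 1) = m13 - 1 - x := by ring
  fin_cases k <;>
  simp only [Fin.zero_eta, Fin.mk_one, Fin.reduceFinMk, LinearMap.sub_apply, LinearMap.comp_apply,
    LinearMap.zero_apply, map_add, map_neg, map_smul, map_zero, E12_bv R hq hm, E32_bv₃,
    E32_bv₀ R hq hm, E32_bv₁ R hq hm, E32_bv₂ R hq hm, M12, M22, trip, e₁, e₂, e₃] <;>
  module

theorem E21_comm_E23 (R : GZ q m13 m23 m33) (hq : 0 < q) (hm : m23 ≤ m13) :
    R.E21 ∘ₗ R.E23 - R.E23 ∘ₗ R.E21 = 0 := by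
  refine ext_bv fun k x => ?_
  -- Bring equal arguments of `√[·]` to the same syntactic form.
  have e₁ : x - (m23 - 1) = x - m23 + 1 := by ring
  have e₂ : x - 1 - m23 + 1 = x - m23 := by ring
  have e₃ : m13 - (x - 1) = m13 - x + 1 := by ring
  have e₄ : m13 - 1 - x + 1 = m13 - x := by ring
  fin_cases k <;>
  simp only [Fin.zero_eta, Fin.mk_one, Fin.reduceFinMk, LinearMap.sub_apply, LinearMap.comp_apply,
    LinearMap.zero_apply, map_sub, map_smul, map_zero, E21_bv R hq hm, E23_bv₀,
    E23_bv₁ R hq hm, E23_bv₂ R hq hm, E23_bv₃ R hq hm, M12, M22, trip, e₁, e₂, e₃, e₄] <;>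
  module

end GZ

/-- The operators on `W` satisfy the mixed Cartan relations of
`U_q[gl(2/1)]`: `[E11,E23] = 0`, `[E22,E23] = E23`, `[E33,E23] = −E23`,
`[E11,E32] = 0`, `[E22,E32] = −E32`, `[E33,E32] = E32`, and moreover
`[E12,E32] = 0` and `[E21,E23] = 0` as linear operators on `W`. -/
theorem stmt_5 (q : ℝ) (hq : 0 < q) (hq1 : q ≠ 1)
    (m13 m23 m33 : ℤ) (hm : m23 ≤ m13) (R : GZ q m13 m23 m33) :
    R.E11 ∘ₗ R.E23 - R.E23 ∘ₗ R.E11 = 0 ∧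
    R.E22 ∘ₗ R.E23 - R.E23 ∘ₗ R.E22 = R.E23 ∧
    R.E33 ∘ₗ R.E23 - R.E23 ∘ₗ R.E33 = -R.E23 ∧
    R.E11 ∘ₗ R.E32 - R.E32 ∘ₗ R.E11 = 0 ∧
    R.E22 ∘ₗ R.E32 - R.E32 ∘ₗ R.E22 = -R.E32 ∧
    R.E33 ∘ₗ R.E32 - R.E32 ∘ₗ R.E33 = R.E32 ∧
    R.E12 ∘ₗ R.E32 - R.E32 ∘ₗ R.E12 = 0 ∧
    R.E21 ∘ₗ R.E23 - R.E23 ∘ₗ R.E21 = 0 := by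
  obtain ⟨h₁, h₂, h₃⟩ := R.cartan_E23 hq hm
  obtain ⟨h₄, h₅, h₆⟩ := R.cartan_E32 hq hm
  exact ⟨h₁, h₂, h₃, h₄, h₅, h₆, R.E12_comm_E32 hq hm, R.E21_comm_E23 hq hm⟩
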